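/- Let X and Y be measurable spaces each equipped with a partial order, and x ↦ κ_x a measurable family of probability measures on Y which is monotone in the sense that x ≤ x′ implies ∫ u dκ_x ≤ ∫ u dκ_{x′} for every bounded monotone measurable u : Y → ℝ. Let w : X × Y → ℝ be a bounded measurable function, monotone for the product order. Then the function x ↦ ∫_Y w(x,y) dκ_x(y) is monotone on X. -/

import Mathlib

open MeasureTheory ProbabilityTheory

section StochasticOrder

variable {X Y : Type*} [Preorder X] [MeasurableSpace Y] [Preorder Y]

/-- The stochastic order (first-order stochastic dominance) on measures, the order in which a
monotone family of measures increases. It is tested on bounded functions so that all integrals are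
genuine for finite measures; against an infinite measure a non-integrable test function contributes
the junk value `0`. -/
def StochasticLE (μ ν : Measure Y) : Prop :=
  ∀ u : Y → ℝ, Measurable u → Monotone u → (∃ C : ℝ, ∀ y, |u y| ≤ C) →
    ∫ y, u y ∂μ ≤ ∫ y, u y ∂ν

theorem StochasticLE.integral_le_integral {μ ν : Measure Y} [IsFiniteMeasure μ] {f g : Y → ℝ}
    (hμν : StochasticLE μ ν) (hf : Integrable f μ) (hg : Measurable g) (hg_mono : Monotone g)
    (hg_bdd : ∃ C : ℝ, ∀ y, |g y| ≤ C) (hfg : f ≤ᵐ[μ] g) :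
    ∫ y, f y ∂μ ≤ ∫ y, g y ∂ν := by
  have hg_int : Integrable g μ := by
    obtain ⟨C, hC⟩ := hg_bdd
    exact .of_bound hg.aestronglyMeasurable C (ae_of_all μ hC)
  calc ∫ y, f y ∂μ ≤ ∫ y, g y ∂μ := integral_mono_ae hf hg_int hfg
    _ ≤ ∫ y, g y ∂ν := hμν g hg hg_mono hg_bdd

theorem monotone_integral_of_monotone_kernel_general
    (κ : X → Measure Y) [∀ x, IsFiniteMeasure (κ x)]
    (hκ_mono : ∀ x x' : X, x ≤ x' → StochasticLE (κ x) (κ x'))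
    (w : X × Y → ℝ) (hw : ∀ x, Measurable fun y => w (x, y))
    (hw_bdd : ∀ x, ∃ C : ℝ, ∀ y, |w (x, y)| ≤ C) (hw_mono : Monotone w) :
    Monotone fun x => ∫ y, w (x, y) ∂κ x := by
  intro x x' hxx'
  have hw_int : Integrable (fun y => w (x, y)) (κ x) := by
    obtain ⟨C, hC⟩ := hw_bdd x
    exact .of_bound (hw x).aestronglyMeasurable C (ae_of_all _ hC)
  have hw_mono_right : Monotone fun y => w (x', y) :=
    fun _ _ hyy' => hw_mono (Prod.mk_le_mk.2 ⟨le_rfl, hyy'⟩)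
  have hw_le : ∀ y, w (x, y) ≤ w (x', y) :=
    fun _ => hw_mono (Prod.mk_le_mk.2 ⟨hxx', le_rfl⟩)
  exact (hκ_mono x x' hxx').integral_le_integral hw_int (hw x') hw_mono_right (hw_bdd x')
    (ae_of_all _ hw_le)

end StochasticOrder

theorem monotone_integral_of_monotone_kernel
    {X Y : Type*} [MeasurableSpace X] [MeasurableSpace Y]
    [PartialOrder X] [PartialOrder Y]
    (κ : Kernel X Y) [IsMarkovKernel κ]
    (hκmono : ∀ x x' : X, x ≤ x' → ∀ u : Y → ℝ,
      Measurable u → Monotone u → (∃ C : ℝ, ∀ y, |u y| ≤ C) →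
      ∫ y, u y ∂κ x ≤ ∫ y, u y ∂κ x')
    (w : X × Y → ℝ) (hw : Measurable w) (hwbd : ∃ C : ℝ, ∀ p, |w p| ≤ C)
    (hwmono : Monotone w) :
    Monotone (fun x => ∫ y, w (x, y) ∂κ x) :=
  monotone_integral_of_monotone_kernel_general κ hκmono w (fun _ => hw.comp measurable_prodMk_left)
    (fun x => hwbd.imp fun _ hC y => hC (x, y)) hwmono
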